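/- arXiv:1001.4360 — 2 statements merged into one kernel-verified Lean document; each statement's English description precedes it below -/
import Mathlib

section
/- For every integer r ≥ 1, every integer i, and every integer n ≥ 1, the generalized cluster variables satisfy X(i, n) · X(i+1, n) = X(i, n+1) · X(i+1, n-1) + 1 in the field ℚ(x_1,…,x_r). (This expresses, for the almost split sequence 0 → E_i[n] → E_i[n+1] ⊕ E_{i+1}[n-1] → E_{i+1}[n] → 0 in the category of nilpotent representations of the cyclic quiver, the relation X_M · X_{τM} = X_B + 1, where X of a direct sum is the product of the X's of the summands.) -/
/-- The ambient field `ℚ(x_1, …, x_r)`, realized as the fraction field of the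
polynomial ring over `ℚ` in variables indexed by `ZMod r` (so indices are
automatically read modulo `r`). -/
noncomputable abbrev CyclicField (r : ℕ) : Type :=
  FractionRing (MvPolynomial (ZMod r) ℚ)

/-- The variable `x_i` for `i : ℤ`, with `x_{i+r} = x_i`. -/
noncomputable def xv (r : ℕ) (i : ℤ) : CyclicField r :=
  algebraMap (MvPolynomial (ZMod r) ℚ) (CyclicField r) (MvPolynomial.X (i : ZMod r))

/-- The generalized cluster variable `X(l, n)` (the image of the indecomposable
nilpotent representation `E_l[n]` under the Caldero–Chapoton map):
`X(l,0) = 1` and, for `n ≥ 1`,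
`X(l,n) = x_{l+n}/x_l + Σ_{k=1}^{n-1} (x_{l+n}·x_{l+r-1})/(x_{l+k-1}·x_{l+k}) + x_{l+r-1}/x_{l+n-1}`. -/
noncomputable def Xgcv (r : ℕ) (l : ℤ) : ℕ → CyclicField r
  | 0 => 1
  | n + 1 =>
      xv r (l + n + 1) / xv r l
        + ∑ k ∈ Finset.Icc 1 n,
            (xv r (l + n + 1) * xv r (l + r - 1)) / (xv r (l + k - 1) * xv r (l + k))
        + xv r (l + r - 1) / xv r (l + n)

theorem xv_ne_zero (r : ℕ) (i : ℤ) : xv r i ≠ 0 := by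
  unfold xv
  rw [Ne, FaithfulSMul.algebraMap_eq_zero_iff]
  exact MvPolynomial.X_ne_zero _

/-- Uniform closed form of `X(l, n)`, valid for all `n`. -/
theorem Xgcv_eq (r : ℕ) (l : ℤ) (n : ℕ) :
    Xgcv r l n = xv r (l + n) * (1 / xv r l + xv r (l + r - 1) *
      ∑ k ∈ Finset.range n, 1 / (xv r (l + k) * xv r (l + k + 1))) := by
  cases n with
  | zero =>
    have := xv_ne_zero r l
    simp [Xgcv, this]
  | succ n =>
    have h1 := xv_ne_zero r (l + n)
    have h2 := xv_ne_zero r (l + n + 1)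
    have hs : ∑ k ∈ Finset.Icc 1 n,
        (xv r (l + n + 1) * xv r (l + r - 1)) / (xv r (l + k - 1) * xv r (l + k))
        = xv r (l + n + 1) * xv r (l + r - 1) *
          ∑ k ∈ Finset.range n, 1 / (xv r (l + k) * xv r (l + k + 1)) := by
      rw [Finset.range_eq_Ico, Finset.mul_sum,
        ← Finset.Ico_add_one_right_eq_Icc, Finset.sum_Ico_eq_sum_range,
        Nat.add_sub_cancel, Finset.range_eq_Ico]
      refine Finset.sum_congr rfl fun k _ => ?_
      have e1 : l + ((1 + k : ℕ) : ℤ) - 1 = l + k := by push_cast; ring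
      have e2 : l + ((1 + k : ℕ) : ℤ) = l + k + 1 := by push_cast; ring
      rw [e1, e2]
      ring
    have e : l + ((n + 1 : ℕ) : ℤ) = l + n + 1 := by push_cast; ring
    rw [Xgcv, hs, Finset.sum_range_succ, e]
    generalize ∑ k ∈ Finset.range n, 1 / (xv r (l + k) * xv r (l + k + 1)) = S
    have h0 := xv_ne_zero r l
    field_simp
    try ring

/-- `X(l+1, n)` expressed through the sums attached to `l`. -/
theorem Xgcv_succ_eq (r : ℕ) (l : ℤ) (n : ℕ) :
    Xgcv r (l + 1) n = xv r (l + n + 1) * (xv r l *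
      ∑ k ∈ Finset.range (n + 1), 1 / (xv r (l + k) * xv r (l + k + 1))) := by
  have h0 := xv_ne_zero r l
  have h1 := xv_ne_zero r (l + 1)
  have hper : xv r (l + 1 + r - 1) = xv r l := by
    unfold xv
    simp
  rw [Xgcv_eq, hper, Finset.sum_range_succ']
  have e : l + 1 + (n : ℤ) = l + n + 1 := by ring
  have hs : ∑ k ∈ Finset.range n, 1 / (xv r (l + 1 + k) * xv r (l + 1 + k + 1))
      = ∑ k ∈ Finset.range n,
        1 / (xv r (l + (k + 1 : ℕ)) * xv r (l + (k + 1 : ℕ) + 1)) := by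
    refine Finset.sum_congr rfl fun k _ => ?_
    have e1 : l + ((k + 1 : ℕ) : ℤ) = l + 1 + k := by push_cast; ring
    rw [e1]
  rw [hs, e]
  generalize ∑ k ∈ Finset.range n,
        1 / (xv r (l + (k + 1 : ℕ)) * xv r (l + (k + 1 : ℕ) + 1)) = S
  simp only [Nat.cast_zero, add_zero]
  field_simp
  try ring

/-- `X(i, n) · X(i+1, n) = X(i, n+1) · X(i+1, n-1) + 1` for `r ≥ 1`, `i ∈ ℤ`, `n ≥ 1`. -/
theorem stmt2 (r : ℕ) (hr : 1 ≤ r) (i : ℤ) (n : ℕ) (hn : 1 ≤ n) :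
    Xgcv r i n * Xgcv r (i + 1) n = Xgcv r i (n + 1) * Xgcv r (i + 1) (n - 1) + 1 := by
  obtain ⟨m, rfl⟩ : ∃ m, n = m + 1 := ⟨n - 1, by omega⟩
  rw [Nat.add_sub_cancel, Xgcv_succ_eq, Xgcv_succ_eq, Xgcv_eq, Xgcv_eq,
    Finset.sum_range_succ _ (m + 1)]
  have e1 : i + ((m + 1 : ℕ) : ℤ) = i + m + 1 := by push_cast; ring
  have e2 : i + ((m + 1 + 1 : ℕ) : ℤ) = i + m + 1 + 1 := by push_cast; ring
  rw [e1, e2]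
  generalize ∑ k ∈ Finset.range (m + 1), 1 / (xv r (i + k) * xv r (i + k + 1)) = S
  have h0 := xv_ne_zero r i
  have h1 := xv_ne_zero r (i + m + 1)
  have h2 := xv_ne_zero r (i + m + 1 + 1)
  field_simp
  ring
end

section
/- For the cyclic quiver with r = 2 vertices, the subring of ℚ(x_1,x_2) generated by all the generalized cluster variables X(l,n) (l ∈ {1,2}, n ∈ ℕ) has the set {1} ∪ {(2x_2/x_1)^m : m ≥ 1} ∪ {(2x_1/x_2)^n : n ≥ 1} as a ℤ-basis; that is, this set is ℤ-linearly independent and its ℤ-span equals that subring. (Here 2x_2/x_1 = X(1,1) = X_{E_1} and 2x_1/x_2 = X(2,1) = X_{E_2}, and the basis is the set of X_R over modules R with vanishing self-extensions.) -/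
noncomputable section HelperSection

lemma xv_ne (i : ℤ) : xv 2 i ≠ 0 := by
  unfold xv
  rw [Ne, FaithfulSMul.algebraMap_eq_zero_iff]
  exact MvPolynomial.X_ne_zero _

lemma xv_add_two (i : ℤ) (j : ℤ) : xv 2 (i + 2 * j) = xv 2 i := by
  unfold xv
  congr 2
  push_cast
  have : (2 : ZMod 2) = 0 := rfl
  rw [this]; ring

lemma xv_congr {i j : ℤ} (h : i % 2 = j % 2) : xv 2 i = xv 2 j := by
  have : i = j + 2 * (i / 2 - j / 2) := by omega
  rw [this, xv_add_two]

lemma xv_prod (i : ℤ) (l : ℤ) : xv 2 (i - 1) * xv 2 i = xv 2 l * xv 2 (l + 1) := by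
  rcases Int.emod_two_eq_zero_or_one (i - l) with h | h
  · rw [xv_congr (i := i - 1) (j := l + 1) (by omega), xv_congr (i := i) (j := l) (by omega), mul_comm]
  · rw [xv_congr (i := i - 1) (j := l) (by omega), xv_congr (i := i) (j := l + 1) (by omega)]

lemma X_formula (l : ℤ) (n : ℕ) : Xgcv 2 l (n + 1) =
    xv 2 (l + n + 1) / xv 2 l + n * (xv 2 (l + n + 1) / xv 2 l) + xv 2 (l + 1) / xv 2 (l + n) := by
  have h1 : xv 2 (l + (2 : ℕ) - 1) = xv 2 (l + 1) := xv_congr (by push_cast; omega)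
  simp only [Xgcv, h1]
  have h2 : ∀ k ∈ Finset.Icc 1 n, (xv 2 (l + n + 1) * xv 2 (l + 1)) /
      (xv 2 (l + k - 1) * xv 2 (l + k)) = xv 2 (l + n + 1) / xv 2 l := by
    intro k _
    rw [xv_prod (l + k) l]
    have := xv_ne l
    have := xv_ne (l + 1)
    field_simp
  rw [Finset.sum_congr rfl h2]
  simp

lemma X_even (l : ℤ) (m : ℕ) : Xgcv 2 l (2 * m + 1) = (m + 1 : ℕ) * (2 * xv 2 (l + 1) / xv 2 l) := by
  rw [X_formula, xv_congr (i := l + (2 * m : ℕ) + 1) (j := l + 1) (by push_cast; omega),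
    xv_congr (i := l + (2 * m : ℕ)) (j := l) (by push_cast; omega)]
  push_cast
  ring

lemma X_odd (l : ℤ) (m : ℕ) : Xgcv 2 l (2 * m + 1 + 1) = (2 * m + 3 : ℕ) := by
  rw [X_formula, xv_congr (i := l + (2 * m + 1 : ℕ) + 1) (j := l) (by push_cast; omega),
    xv_congr (i := l + (2 * m + 1 : ℕ)) (j := l + 1) (by push_cast; omega),
    div_self (xv_ne _), div_self (xv_ne _)]
  push_cast
  ring

/-- the family -/
def fam (k : ℤ) : CyclicField 2 :=
  (2 * xv 2 2 / xv 2 1) ^ k.toNat * (2 * xv 2 1 / xv 2 2) ^ (-k).toNat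

lemma fam_eq (k : ℤ) : fam k = 2 ^ k.natAbs * (xv 2 2 / xv 2 1) ^ k := by
  have h1 := xv_ne 1
  have h2 := xv_ne 2
  unfold fam
  obtain ⟨n, rfl | rfl⟩ := k.eq_nat_or_neg
  · simp [mul_div_assoc, mul_pow]
  · simp [mul_div_assoc, mul_pow, div_pow]

lemma fam_mul (i j : ℤ) : fam i * fam j =
    ((2 ^ (i.natAbs + j.natAbs - (i + j).natAbs) : ℤ)) • fam (i + j) := by
  have ht : xv 2 2 / xv 2 1 ≠ 0 := div_ne_zero (xv_ne _) (xv_ne _)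
  have h : i.natAbs + j.natAbs = (i.natAbs + j.natAbs - (i + j).natAbs) + (i + j).natAbs := by omega
  have h2 : (2 : CyclicField 2) ^ i.natAbs * 2 ^ j.natAbs =
      2 ^ (i.natAbs + j.natAbs - (i + j).natAbs) * 2 ^ (i + j).natAbs := by
    rw [← pow_add, ← pow_add, ← h]
  rw [fam_eq, fam_eq, fam_eq, zpow_add₀ ht, zsmul_eq_mul]
  push_cast
  linear_combination ((xv 2 2 / xv 2 1) ^ i * (xv 2 2 / xv 2 1) ^ j) * h2

lemma fam_zero : fam 0 = 1 := by simp [fam]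
lemma fam_one : fam 1 = 2 * xv 2 2 / xv 2 1 := by simp [fam]
lemma fam_neg_one : fam (-1) = 2 * xv 2 1 / xv 2 2 := by simp [fam]

/-- exponent vector -/
def expo (N : ℕ) (k : ℤ) : ZMod 2 →₀ ℕ :=
  Finsupp.single 0 (N + k).toNat + Finsupp.single 1 (N - k).toNat

lemma fam_monomial (N : ℕ) (k : ℤ) (hk : k.natAbs ≤ N) (c : ℤ) :
    algebraMap (MvPolynomial (ZMod 2) ℚ) (CyclicField 2)
      (MvPolynomial.monomial (expo N k) ((c * 2 ^ k.natAbs : ℤ) : ℚ)) =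
    (xv 2 2 * xv 2 1) ^ N * (c • fam k) := by
  have h1 := xv_ne 1
  have h2 := xv_ne 2
  have e : MvPolynomial.monomial (expo N k) ((c * 2 ^ k.natAbs : ℤ) : ℚ) =
      ((c * 2 ^ k.natAbs : ℤ) : MvPolynomial (ZMod 2) ℚ) * (MvPolynomial.X 0 ^ (N + k).toNat *
        MvPolynomial.X 1 ^ (N - k).toNat) := by
    rw [MvPolynomial.X_pow_eq_monomial, MvPolynomial.X_pow_eq_monomial, MvPolynomial.monomial_mul,
      ← map_intCast (MvPolynomial.C (σ := ZMod 2) (R := ℚ)), MvPolynomial.C_mul_monomial]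
    simp [expo]
  have x2 : algebraMap (MvPolynomial (ZMod 2) ℚ) (CyclicField 2) (MvPolynomial.X 0) = xv 2 2 := by
    unfold xv; congr 2
  have x1 : algebraMap (MvPolynomial (ZMod 2) ℚ) (CyclicField 2) (MvPolynomial.X 1) = xv 2 1 := by
    unfold xv; congr 2
  rw [e, map_mul, map_mul, map_pow, map_pow, map_intCast, x1, x2, fam_eq, zsmul_eq_mul,
    ← zpow_natCast (xv 2 2), ← zpow_natCast (xv 2 1), Int.toNat_of_nonneg (by omega),
    Int.toNat_of_nonneg (by omega), zpow_add₀ h2, zpow_sub₀ h1, div_zpow, mul_pow]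
  push_cast
  simp only [zpow_natCast]
  have := zpow_ne_zero k h1
  field_simp

lemma fam_li : LinearIndependent ℤ fam := by
  rw [linearIndependent_iff']
  intro s g hs i hi
  set N := ∑ k ∈ s, k.natAbs with hN
  have hle : ∀ k ∈ s, k.natAbs ≤ N := fun k hk =>
    Finset.single_le_sum (f := fun k : ℤ => k.natAbs) (fun _ _ => Nat.zero_le _) hk
  have hP : ∑ k ∈ s, MvPolynomial.monomial (expo N k) ((g k * 2 ^ k.natAbs : ℤ) : ℚ) = 0 := by
    rw [← FaithfulSMul.algebraMap_eq_zero_iff (MvPolynomial (ZMod 2) ℚ) (CyclicField 2), map_sum,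
      Finset.sum_congr rfl (fun k hk => fam_monomial N k (hle k hk) (g k)), ← Finset.mul_sum, hs,
      mul_zero]
  have hc := congrArg (MvPolynomial.coeff (expo N i)) hP
  rw [MvPolynomial.coeff_sum, Finset.sum_eq_single i] at hc
  · simpa using hc
  · intro k hk hki
    rw [MvPolynomial.coeff_monomial, if_neg]
    intro h
    have h0 := DFunLike.congr_fun h 0
    simp [expo] at h0
    have := hle k hk
    have := hle i hi
    omega
  · exact fun h => absurd hi h

lemma X_one_one : Xgcv 2 1 1 = 2 * xv 2 2 / xv 2 1 := by
  simpa using X_even 1 0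

lemma X_two_one : Xgcv 2 2 1 = 2 * xv 2 1 / xv 2 2 := by
  have := X_even 2 0
  rw [xv_congr (i := 2 + 1) (j := 1) (by omega)] at this
  simpa using this

lemma X_mem (l : ℤ) (n : ℕ) (hl : l = 1 ∨ l = 2) :
    Xgcv 2 l n ∈ Submodule.span ℤ (Set.range fam) := by
  have hf : ∀ (c : ℕ) (k : ℤ), (c : CyclicField 2) * fam k ∈ Submodule.span ℤ (Set.range fam) := by
    intro c k
    have := Submodule.smul_mem _ (c : ℤ) (Submodule.subset_span (R := ℤ) (Set.mem_range_self (f := fam) k))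
    simpa using this
  rcases n with _ | n
  · simpa [Xgcv, fam_zero] using hf 1 0
  obtain ⟨m, rfl | rfl⟩ := n.even_or_odd'
  · rw [X_even]
    rcases hl with rfl | rfl
    · have := hf (m + 1) 1
      rw [fam_one] at this
      exact this
    · have := hf (m + 1) (-1)
      rw [fam_neg_one] at this
      rwa [xv_congr (i := 2 + 1) (j := 1) (by omega)]
  · rw [X_odd]
    simpa [fam_zero] using hf (2 * m + 3) 0

lemma fam_span : (Submodule.span ℤ (Set.range fam) : Set (CyclicField 2)) =
      (Algebra.adjoin ℤ
          {x : CyclicField 2 | ∃ (l : ℤ) (n : ℕ), (l = 1 ∨ l = 2) ∧ x = Xgcv 2 l n} :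
        Set (CyclicField 2)) := by
  apply Set.Subset.antisymm
  · intro x hx
    change x ∈ Algebra.adjoin ℤ
      {x : CyclicField 2 | ∃ (l : ℤ) (n : ℕ), (l = 1 ∨ l = 2) ∧ x = Xgcv 2 l n}
    induction hx using Submodule.span_induction with
    | mem x hx =>
      obtain ⟨k, rfl⟩ := hx
      unfold fam
      rw [← X_one_one, ← X_two_one]
      refine mul_mem (pow_mem (Algebra.subset_adjoin ?_) _) (pow_mem (Algebra.subset_adjoin ?_) _)
      · exact ⟨1, 1, Or.inl rfl, rfl⟩
      · exact ⟨2, 1, Or.inr rfl, rfl⟩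
    | zero => exact zero_mem _
    | add x y _ _ hx hy => exact add_mem hx hy
    | smul c x _ hx =>
      rw [zsmul_eq_mul]
      exact mul_mem (intCast_mem _ c) hx
  · intro x hx
    have hmul : ∀ x ∈ Submodule.span ℤ (Set.range fam), ∀ y ∈ Submodule.span ℤ (Set.range fam),
        x * y ∈ Submodule.span ℤ (Set.range fam) := by
      intro x hx y hy
      induction hx using Submodule.span_induction with
      | zero => rw [zero_mul]; exact zero_mem _
      | add a b _ _ ha hb => rw [add_mul]; exact add_mem ha hb
      | smul c a _ ha => rw [smul_mul_assoc]; exact Submodule.smul_mem _ _ ha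
      | mem x hx =>
        obtain ⟨i, rfl⟩ := hx
        induction hy using Submodule.span_induction with
        | zero => rw [mul_zero]; exact zero_mem _
        | add a b _ _ ha hb => rw [mul_add]; exact add_mem ha hb
        | smul c a _ ha => rw [mul_smul_comm]; exact Submodule.smul_mem _ _ ha
        | mem y hy =>
          obtain ⟨j, rfl⟩ := hy
          rw [fam_mul]
          exact Submodule.smul_mem _ _ (Submodule.subset_span ⟨_, rfl⟩)
    change x ∈ Submodule.span ℤ (Set.range fam)
    induction hx using Algebra.adjoin_induction with
    | mem x hx =>
      obtain ⟨l, n, hl, rfl⟩ := hx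
      exact X_mem l n hl
    | algebraMap r =>
      have := Submodule.smul_mem _ r (Submodule.subset_span (R := ℤ) (Set.mem_range_self (f := fam) 0))
      rw [fam_zero, zsmul_eq_mul, mul_one] at this
      rwa [eq_intCast]
    | add x y _ _ hx hy => exact add_mem hx hy
    | mul x y _ _ hx hy => exact hmul x hx y hy

end HelperSection

/-- for `r = 2`, the family `{1} ∪ {(2x_2/x_1)^m : m ≥ 1} ∪ {(2x_1/x_2)^n : n ≥ 1}`
(indexed by `k : ℤ`, with `k > 0` giving `(2x_2/x_1)^k`, `k < 0` giving `(2x_1/x_2)^{-k}`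
and `k = 0` giving `1`) is a `ℤ`-basis of the subring of `ℚ(x_1, x_2)` generated by all
generalized cluster variables: it is `ℤ`-linearly independent and its `ℤ`-span is that
subring.  Here `2x_2/x_1 = X(1,1)` and `2x_1/x_2 = X(2,1)`. -/
theorem stmt10 :
    Xgcv 2 1 1 = 2 * xv 2 2 / xv 2 1 ∧ Xgcv 2 2 1 = 2 * xv 2 1 / xv 2 2 ∧
    LinearIndependent ℤ
      (fun k : ℤ => (2 * xv 2 2 / xv 2 1) ^ k.toNat * (2 * xv 2 1 / xv 2 2) ^ (-k).toNat) ∧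
    (Submodule.span ℤ
        (Set.range fun k : ℤ =>
          (2 * xv 2 2 / xv 2 1) ^ k.toNat * (2 * xv 2 1 / xv 2 2) ^ (-k).toNat) :
        Set (CyclicField 2)) =
      (Algebra.adjoin ℤ
          {x : CyclicField 2 | ∃ (l : ℤ) (n : ℕ), (l = 1 ∨ l = 2) ∧ x = Xgcv 2 l n} :
        Set (CyclicField 2)) := by
  exact ⟨X_one_one, X_two_one, fam_li, fam_span⟩
end
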